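/- Let f ∈ GS¹(Ω_D) ∩ C¹(Ω_D, 𝔸). Then the following hold on Ω_D ∖ ℝ^{p+1}: (i) Γf(x) = (q−1) x_q f′_s(x), where Γ is the spherical Dirac operator Γf = −(1/2) Σ_{i,j=p+1}^{p+q} v_i(v_j(L_{ij} f)) with L_{ij} = x_i ∂_{x_j} − x_j ∂_{x_i}; (ii) (D_x − D_ω) f(x) = (1−q) f′_s(x), where D_ω f = (D_{x_p} + ω∂_r) f is the slice Cauchy–Riemann operator. -/

import Mathlib

open scoped BigOperators
open Filter Topology

namespace GPSM

variable (A : Type*) [NormedAddCommGroup A] [NormedSpace ℝ A] [Mul A] [One A]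

/-- `A` is a real alternative algebra with unit `1`, of finite dimension `d > 1`,
equipped with an anti-involution `conj` (a real-linear map with `(a^c)^c = a`,
`(ab)^c = b^c a^c`, fixing the reals).  The associator is alternating (left/right
alternative laws). -/
structure IsAltStarAlg (conj : A → A) : Prop where
  finDim : FiniteDimensional ℝ A
  one_lt_finrank : 1 < Module.finrank ℝ A
  mul_add' : ∀ a b c : A, a * (b + c) = a * b + a * c
  add_mul' : ∀ a b c : A, (a + b) * c = a * c + b * c
  smul_mul' : ∀ (r : ℝ) (a b : A), (r • a) * b = r • (a * b)
  mul_smul' : ∀ (r : ℝ) (a b : A), a * (r • b) = r • (a * b)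
  one_mul' : ∀ a : A, 1 * a = a
  mul_one' : ∀ a : A, a * 1 = a
  alt_left : ∀ a b : A, a * (a * b) = a * a * b
  alt_right : ∀ a b : A, a * b * b = a * (b * b)
  conj_add : ∀ a b : A, conj (a + b) = conj a + conj b
  conj_smul : ∀ (r : ℝ) (a : A), conj (r • a) = r • conj a
  conj_conj : ∀ a : A, conj (conj a) = a
  conj_mul : ∀ a b : A, conj (a * b) = conj b * conj a
  conj_one : conj 1 = 1

/-- `v 0, v 1, …, v m` is a hypercomplex basis of the hypercomplex subspace
`M = span(v 0, …, v m)` of `A`: `v 0 = 1`, `t(v s) = 0`, `n(v s) = 1`, the `v s`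
anticommute for distinct `s, t ∈ {1,…,m}`, they are linearly independent, and
`M` is contained in the quadratic cone `Q_A`. -/
structure IsHypBasis (conj : A → A) (v : ℕ → A) (m : ℕ) : Prop where
  v_zero : v 0 = 1
  trace_zero : ∀ s, 1 ≤ s → s ≤ m → v s + conj (v s) = 0
  norm_one : ∀ s, 1 ≤ s → s ≤ m → v s * conj (v s) = 1
  anticomm : ∀ s t, 1 ≤ s → s ≤ m → 1 ≤ t → t ≤ m → s ≠ t → v s * v t = -(v t * v s)
  indep : LinearIndependent ℝ (fun i : Fin (m + 1) => v i)
  mem_cone : ∀ x ∈ Submodule.span ℝ (Set.range fun i : Fin (m + 1) => v (i : ℕ)),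
      ∃ tr nr : ℝ, x + conj x = tr • (1 : A) ∧ x * conj x = nr • (1 : A) ∧
        ((∃ r : ℝ, x = r • (1 : A)) ∨ tr ^ 2 < 4 * nr)

variable {A}

/-- Identification of `ℝ^{m+1}` with the hypercomplex subspace `M`:
`(x_0,…,x_m) ↦ Σ x_s • v s`. -/
def emb (v : ℕ → A) (m : ℕ) (x : Fin (m + 1) → ℝ) : A :=
  ∑ s : Fin (m + 1), x s • v (s : ℕ)

/-- First `p+1` coordinates of a point of `M ≅ ℝ^{m+1}`, i.e. the `x_p`-part. -/
def projP (m p : ℕ) (x : Fin (m + 1) → ℝ) : Fin (p + 1) → ℝ := fun s =>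
  if h : (s : ℕ) < m + 1 then x ⟨(s : ℕ), h⟩ else 0

/-- Inclusion `ℝ^{p+1} ⊆ ℝ^{m+1}` (remaining coordinates `0`). -/
def injP (m p : ℕ) (y : Fin (p + 1) → ℝ) : Fin (m + 1) → ℝ := fun s =>
  if h : (s : ℕ) < p + 1 then y ⟨(s : ℕ), h⟩ else 0

/-- The coordinates of `x_q` (last `q = m - p` coordinates of `x`). -/
def xqpart (m p : ℕ) (x : Fin (m + 1) → ℝ) : Fin (m + 1) → ℝ := fun s =>
  if (s : ℕ) ≤ p then 0 else x s

/-- The coordinates of `x_p` inside `ℝ^{m+1}`. -/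
def xppart (m p : ℕ) (x : Fin (m + 1) → ℝ) : Fin (m + 1) → ℝ := fun s =>
  if (s : ℕ) ≤ p then x s else 0

/-- `r = |x_q|`. -/
noncomputable def rad (m p : ℕ) (x : Fin (m + 1) → ℝ) : ℝ :=
  Real.sqrt (∑ s : Fin (m + 1), (xqpart m p x s) ^ 2)

/-- `ω = x_q / |x_q|` (coordinates), `0` when `x_q = 0`. -/
noncomputable def normq (m p : ℕ) (x : Fin (m + 1) → ℝ) : Fin (m + 1) → ℝ :=
  (rad m p x)⁻¹ • xqpart m p x

/-- The reflection `x = x_p + x_q ↦ x_⋄ = x_p - x_q`. -/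
def reflP (m p : ℕ) (x : Fin (m + 1) → ℝ) : Fin (m + 1) → ℝ := fun s =>
  if (s : ℕ) ≤ p then x s else -x s

/-- The sphere `𝕊 = {x_q ∈ span(v_{p+1},…,v_m) : x_q² = -1}`, in coordinates. -/
def Sph (v : ℕ → A) (m p : ℕ) : Set (Fin (m + 1) → ℝ) :=
  {w | (∀ s : Fin (m + 1), (s : ℕ) ≤ p → w s = 0) ∧ emb v m w * emb v m w = -1}

/-- The point `x_p + r ω` of `M ≅ ℝ^{m+1}`. -/
def pt (m p : ℕ) (w : Fin (m + 1) → ℝ) (y : Fin (p + 1) → ℝ) (r : ℝ) :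
    Fin (m + 1) → ℝ :=
  injP m p y + r • w

/-- The slice `Ω_ω ⊆ ℝ^{p+2}` of `Ω` at `ω`. -/
def sliceSet (m p : ℕ) (Ω : Set (Fin (m + 1) → ℝ)) (w : Fin (m + 1) → ℝ) :
    Set ((Fin (p + 1) → ℝ) × ℝ) := {z | pt m p w z.1 z.2 ∈ Ω}

/-- The restriction `f_ω` of `f` to the slice at `ω`, as a function on `ℝ^{p+2}`. -/
def sliceFun (m p : ℕ) (f : (Fin (m + 1) → ℝ) → A) (w : Fin (m + 1) → ℝ) :
    (Fin (p + 1) → ℝ) × ℝ → A := fun z => f (pt m p w z.1 z.2)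

/-- Partial derivative `∂_{x_s}` of a function on `ℝ^{m+1}`. -/
noncomputable def pdF (m : ℕ) (s : Fin (m + 1)) (f : (Fin (m + 1) → ℝ) → A)
    (x : Fin (m + 1) → ℝ) : A := fderiv ℝ f x (Pi.single s 1)

/-- Partial derivative `∂_{x_s}` of a function on `ℝ^{p+1}`. -/
noncomputable def pdP (p : ℕ) (s : Fin (p + 1)) (g : (Fin (p + 1) → ℝ) → A)
    (y : Fin (p + 1) → ℝ) : A := fderiv ℝ g y (Pi.single s 1)

/-- Partial derivative `∂_{x_s}` of a function on `ℝ^{p+2} = ℝ^{p+1} × ℝ`. -/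
noncomputable def pdSx (p : ℕ) (s : Fin (p + 1)) (G : (Fin (p + 1) → ℝ) × ℝ → A)
    (z : (Fin (p + 1) → ℝ) × ℝ) : A := fderiv ℝ G z (Pi.single s 1, 0)

/-- Partial derivative `∂_r` of a function on `ℝ^{p+2} = ℝ^{p+1} × ℝ`. -/
noncomputable def pdSr (p : ℕ) (G : (Fin (p + 1) → ℝ) × ℝ → A)
    (z : (Fin (p + 1) → ℝ) × ℝ) : A := fderiv ℝ G z (0, 1)

/-- Second partial derivative `∂_r²`. -/
noncomputable def pdSr2 (p : ℕ) (G : (Fin (p + 1) → ℝ) × ℝ → A)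
    (z : (Fin (p + 1) → ℝ) × ℝ) : A := pdSr p (pdSr p G) z

/-- The operator `Σ_{lo ≤ s ≤ hi} v_s ∂_{x_s}` on functions on `ℝ^{m+1}`.
`Dop v m 0 p` is `D_{x_p}`, `Dop v m (p+1) m` is `D_{x_q}`, `Dop v m 0 m` is `D_x`. -/
noncomputable def Dop (v : ℕ → A) (m lo hi : ℕ) (f : (Fin (m + 1) → ℝ) → A)
    (x : Fin (m + 1) → ℝ) : A :=
  ∑ s : Fin (m + 1), if lo ≤ (s : ℕ) ∧ (s : ℕ) ≤ hi then v (s : ℕ) * pdF m s f x else 0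

/-- The conjugate operator `∂_{x_0} - Σ_{1 ≤ s ≤ hi} v_s ∂_{x_s}` on functions on
`ℝ^{m+1}`; `Dbarop v m p` is `D̄_{x_p}`, `Dbarop v m m` is `D̄_x`. -/
noncomputable def Dbarop (v : ℕ → A) (m hi : ℕ) (f : (Fin (m + 1) → ℝ) → A)
    (x : Fin (m + 1) → ℝ) : A :=
  pdF m 0 f x -
    ∑ s : Fin (m + 1), if 1 ≤ (s : ℕ) ∧ (s : ℕ) ≤ hi then v (s : ℕ) * pdF m s f x else 0

/-- The operator `D_{x_p} = Σ_{s=0}^p v_s ∂_{x_s}` on functions on `ℝ^{p+1}`. -/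
noncomputable def DopP (v : ℕ → A) (p : ℕ) (g : (Fin (p + 1) → ℝ) → A)
    (y : Fin (p + 1) → ℝ) : A :=
  ∑ s : Fin (p + 1), v (s : ℕ) * pdP p s g y

/-- The operator `D̄_{x_p} = ∂_{x_0} - Σ_{s=1}^p v_s ∂_{x_s}` on functions on `ℝ^{p+1}`. -/
noncomputable def DbaropP (v : ℕ → A) (p : ℕ) (g : (Fin (p + 1) → ℝ) → A)
    (y : Fin (p + 1) → ℝ) : A :=
  pdP p 0 g y - ∑ s : Fin (p + 1), if 1 ≤ (s : ℕ) then v (s : ℕ) * pdP p s g y else 0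

/-- The operator `D_{x_p}` on functions on `ℝ^{p+2} = ℝ^{p+1} × ℝ`. -/
noncomputable def DopSx (v : ℕ → A) (p : ℕ) (G : (Fin (p + 1) → ℝ) × ℝ → A)
    (z : (Fin (p + 1) → ℝ) × ℝ) : A :=
  ∑ s : Fin (p + 1), v (s : ℕ) * pdSx p s G z

/-- The operator `D̄_{x_p}` on functions on `ℝ^{p+2} = ℝ^{p+1} × ℝ`. -/
noncomputable def DbaropSx (v : ℕ → A) (p : ℕ) (G : (Fin (p + 1) → ℝ) × ℝ → A)
    (z : (Fin (p + 1) → ℝ) × ℝ) : A :=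
  pdSx p 0 G z - ∑ s : Fin (p + 1), if 1 ≤ (s : ℕ) then v (s : ℕ) * pdSx p s G z else 0

/-- The Laplacian `Δ_x` on functions on `ℝ^{m+1}`. -/
noncomputable def lapF (m : ℕ) (f : (Fin (m + 1) → ℝ) → A)
    (x : Fin (m + 1) → ℝ) : A :=
  ∑ s : Fin (m + 1), pdF m s (pdF m s f) x

/-- The Laplacian `Δ_{x_p}` on functions on `ℝ^{p+1}`. -/
noncomputable def lapP (p : ℕ) (g : (Fin (p + 1) → ℝ) → A)
    (y : Fin (p + 1) → ℝ) : A :=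
  ∑ s : Fin (p + 1), pdP p s (pdP p s g) y

/-- Iterated Laplacian `Δ_x^k`. -/
noncomputable def lapIterF (m k : ℕ) (f : (Fin (m + 1) → ℝ) → A) :
    (Fin (m + 1) → ℝ) → A :=
  (fun g => lapF m g)^[k] f

/-- Iterated Laplacian `Δ_{x_p}^k`. -/
noncomputable def lapIterP (p k : ℕ) (g : (Fin (p + 1) → ℝ) → A) :
    (Fin (p + 1) → ℝ) → A :=
  (fun h => lapP p h)^[k] g

/-- The Laplacian `Δ_{x'} = Δ_{x_p} + ∂_r²` on functions on `ℝ^{p+2}`. -/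
noncomputable def lapSx (p : ℕ) (G : (Fin (p + 1) → ℝ) × ℝ → A)
    (z : (Fin (p + 1) → ℝ) × ℝ) : A :=
  (∑ s : Fin (p + 1), pdSx p s (pdSx p s G) z) + pdSr2 p G z

/-- The slice Cauchy-Riemann operator `D_ω = D_{x_p} + ω ∂_r` applied to a function
on `ℝ^{p+2}`, where `ω` is given in coordinates by `w`. -/
noncomputable def DomCR (v : ℕ → A) (m p : ℕ) (w : Fin (m + 1) → ℝ)
    (G : (Fin (p + 1) → ℝ) × ℝ → A) (z : (Fin (p + 1) → ℝ) × ℝ) : A :=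
  DopSx v p G z + emb v m w * pdSr p G z

/-- `f` is left generalized partial-slice monogenic (of type `(p, m-p)`) on `Ω`. -/
def GSM (v : ℕ → A) (m p : ℕ) (f : (Fin (m + 1) → ℝ) → A)
    (Ω : Set (Fin (m + 1) → ℝ)) : Prop :=
  ∀ w ∈ Sph v m p, ContDiffOn ℝ 1 (sliceFun m p f w) (sliceSet m p Ω w) ∧
    ∀ z ∈ sliceSet m p Ω w, DomCR v m p w (sliceFun m p f w) z = 0

/-- `Ω` is partially symmetric with respect to `ℝ^{p+1}`. -/
def PSym (v : ℕ → A) (m p : ℕ) (Ω : Set (Fin (m + 1) → ℝ)) : Prop :=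
  ∀ x ∈ Ω, ∀ w ∈ Sph v m p, xppart m p x + rad m p x • w ∈ Ω

/-- `Ω` is a slice domain: a domain meeting `ℝ^{p+1}` all of whose slices are
domains in `ℝ^{p+2}`. -/
def SliceDomain (v : ℕ → A) (m p : ℕ) (Ω : Set (Fin (m + 1) → ℝ)) : Prop :=
  IsOpen Ω ∧ IsConnected Ω ∧ (∃ x ∈ Ω, xqpart m p x = 0) ∧
    ∀ w ∈ Sph v m p, IsConnected (sliceSet m p Ω w)

/-- The reflection `(x_p, r) ↦ (x_p, -r)` of `ℝ^{p+2}`. -/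
def reflD (p : ℕ) (z : (Fin (p + 1) → ℝ) × ℝ) : (Fin (p + 1) → ℝ) × ℝ := (z.1, -z.2)

/-- The p-symmetric completion `Ω_D ⊆ M` of `D ⊆ ℝ^{p+2}`. -/
def OmegaD (v : ℕ → A) (m p : ℕ) (D : Set ((Fin (p + 1) → ℝ) × ℝ)) :
    Set (Fin (m + 1) → ℝ) :=
  {x | ∃ w ∈ Sph v m p, ∃ z ∈ D, x = pt m p w z.1 z.2}

/-- `(F₁, F₂)` satisfies the even-odd (stem function) conditions on `D`. -/
def IsStem (p : ℕ) (D : Set ((Fin (p + 1) → ℝ) × ℝ))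
    (F₁ F₂ : (Fin (p + 1) → ℝ) × ℝ → A) : Prop :=
  ∀ z ∈ D, F₁ (reflD p z) = F₁ z ∧ F₂ (reflD p z) = -F₂ z

/-- `f` is the generalized partial-slice function induced by the stem `(F₁, F₂)`:
`f(x_p + rω) = F₁(x_p, r) + ω F₂(x_p, r)`. -/
def Induced (v : ℕ → A) (m p : ℕ) (D : Set ((Fin (p + 1) → ℝ) × ℝ))
    (F₁ F₂ : (Fin (p + 1) → ℝ) × ℝ → A) (f : (Fin (m + 1) → ℝ) → A) : Prop :=
  ∀ w ∈ Sph v m p, ∀ z ∈ D, f (pt m p w z.1 z.2) = F₁ z + emb v m w * F₂ z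

/-- The generalized Cauchy-Riemann system for the stem `(F₁, F₂)` on `D`. -/
def StemCR (v : ℕ → A) (p : ℕ) (D : Set ((Fin (p + 1) → ℝ) × ℝ))
    (F₁ F₂ : (Fin (p + 1) → ℝ) × ℝ → A) : Prop :=
  ∀ z ∈ D, DopSx v p F₁ z - pdSr p F₂ z = 0 ∧ DbaropSx v p F₂ z + pdSr p F₁ z = 0

/-- `f` is generalized partial-slice regular on `Ω_D`. -/
def MemGSR (v : ℕ → A) (m p : ℕ) (D : Set ((Fin (p + 1) → ℝ) × ℝ))
    (f : (Fin (m + 1) → ℝ) → A) : Prop :=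
  ∃ F₁ F₂ : (Fin (p + 1) → ℝ) × ℝ → A, IsStem p D F₁ F₂ ∧
    ContDiffOn ℝ 1 F₁ D ∧ ContDiffOn ℝ 1 F₂ D ∧
    Induced v m p D F₁ F₂ f ∧ StemCR v p D F₁ F₂

/-- `f` is a generalized partial-slice function on `Ω`. -/
def MemGS (v : ℕ → A) (m p : ℕ) (Ω : Set (Fin (m + 1) → ℝ))
    (f : (Fin (m + 1) → ℝ) → A) : Prop :=
  ∃ F₁ F₂ : (Fin (p + 1) → ℝ) × ℝ → A,
    (∀ z : (Fin (p + 1) → ℝ) × ℝ, F₁ (reflD p z) = F₁ z ∧ F₂ (reflD p z) = -F₂ z) ∧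
    ∀ x ∈ Ω, f x = F₁ (projP m p x, rad m p x) +
      emb v m (normq m p x) * F₂ (projP m p x, rad m p x)

/-- Non-associative power: `a^n` with products taken from the right. -/
def apow (a : A) (n : ℕ) : A := (fun b => a * b)^[n] 1

/-- Partial even part `PE[f](x) = (f(x) + f(x_⋄))/2`. -/
noncomputable def PE (m p : ℕ) (f : (Fin (m + 1) → ℝ) → A)
    (x : Fin (m + 1) → ℝ) : A := (2 : ℝ)⁻¹ • (f x + f (reflP m p x))

/-- Partial odd part `PO[f](x) = (f(x) - f(x_⋄))/2`. -/
noncomputable def PO (m p : ℕ) (f : (Fin (m + 1) → ℝ) → A)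
    (x : Fin (m + 1) → ℝ) : A := (2 : ℝ)⁻¹ • (f x - f (reflP m p x))

/-- `Ω₀* = {x_p + x_q : x_p ∈ Ω₀, x_q ∈ ℝ^q}`. -/
def Omega0star (m p : ℕ) (Ω₀ : Set (Fin (p + 1) → ℝ)) : Set (Fin (m + 1) → ℝ) :=
  {x | projP m p x ∈ Ω₀}

/-- The spherical derivative `f'_s(x) = (1/2) x_q⁻¹ (f(x) - f(x_⋄))`
(using `x_q⁻¹ = -x_q/|x_q|²`). -/
noncomputable def sder (v : ℕ → A) (m p : ℕ) (f : (Fin (m + 1) → ℝ) → A)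
    (x : Fin (m + 1) → ℝ) : A :=
  -(((2 : ℝ) * rad m p x ^ 2)⁻¹) • (emb v m (xqpart m p x) * (f x - f (reflP m p x)))

/-- The spherical Dirac operator
`Γ f = -(1/2) Σ_{p+1 ≤ i,j ≤ m} v_i (v_j (L_{ij} f))`. -/
noncomputable def sphericalGamma (v : ℕ → A) (m p : ℕ) (f : (Fin (m + 1) → ℝ) → A)
    (x : Fin (m + 1) → ℝ) : A :=
  -((2 : ℝ)⁻¹) • ∑ i : Fin (m + 1), ∑ j : Fin (m + 1),
    if p < (i : ℕ) ∧ p < (j : ℕ) then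
      v (i : ℕ) * (v (j : ℕ) * (x i • pdF m j f x - x j • pdF m i f x)) else 0

/-- The slice Cauchy-Riemann operator `D_ω` applied to (the slice restriction of) a
function `f` on `M`, at the point `x` (with `ω = x_q/|x_q|`). -/
noncomputable def DomCRat (v : ℕ → A) (m p : ℕ) (f : (Fin (m + 1) → ℝ) → A)
    (x : Fin (m + 1) → ℝ) : A :=
  DomCR v m p (normq m p x) (sliceFun m p f (normq m p x)) (projP m p x, rad m p x)

/-- `f` is left monogenic on `Ω`: `f ∈ C¹` and `D_x f = 0`. -/
def Monogenic (v : ℕ → A) (m : ℕ) (f : (Fin (m + 1) → ℝ) → A)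
    (Ω : Set (Fin (m + 1) → ℝ)) : Prop :=
  ContDiffOn ℝ 1 f Ω ∧ ∀ x ∈ Ω, Dop v m 0 m f x = 0

/-- `f` is harmonic on `Ω`: `f ∈ C²` and `Δ_x f = 0`. -/
def Harmonic (m : ℕ) (f : (Fin (m + 1) → ℝ) → A)
    (Ω : Set (Fin (m + 1) → ℝ)) : Prop :=
  ContDiffOn ℝ 2 f Ω ∧ ∀ x ∈ Ω, lapF m f x = 0

/-- A family of functions converges normally (locally a summable uniform bound). -/
def NormallyConvOn {E F : Type*} [TopologicalSpace E] [NormedAddCommGroup F]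
    (u : ℕ → E → F) (s : Set E) : Prop :=
  ∀ x ∈ s, ∃ U ∈ nhds x, ∃ c : ℕ → ℝ, Summable c ∧ ∀ k : ℕ, ∀ y ∈ U, ‖u k y‖ ≤ c k

/-- The generalized partial-slice CK-extension
`CK[f₀](x) = Σ_k (r^{2k}/(2k)!)(-Δ_{x_p})^k f₀(x_p)
  + ω Σ_k (r^{2k+1}/(2k+1)!)(-Δ_{x_p})^k (D_{x_p} f₀)(x_p)`. -/
noncomputable def CKe (v : ℕ → A) (m p : ℕ) (f₀ : (Fin (p + 1) → ℝ) → A)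
    (x : Fin (m + 1) → ℝ) : A :=
  (∑' k : ℕ, (((-1 : ℝ) ^ k * rad m p x ^ (2 * k)) / (2 * k).factorial) •
      lapIterP p k f₀ (projP m p x)) +
  emb v m (normq m p x) *
    ∑' k : ℕ, (((-1 : ℝ) ^ k * rad m p x ^ (2 * k + 1)) / (2 * k + 1).factorial) •
      lapIterP p k (DopP v p f₀) (projP m p x)

/-- The coefficient `Γ(q/2)(-1)^k r^{2k} / (2^{2k} k! Γ(k + q/2))`. -/
noncomputable def hgckC (q k : ℕ) (r : ℝ) : ℝ :=
  (Real.Gamma ((q : ℝ) / 2) * (-1) ^ k * r ^ (2 * k)) /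
    (2 ^ (2 * k) * (k.factorial : ℝ) * Real.Gamma ((k : ℝ) + (q : ℝ) / 2))

/-- The coefficient `Γ(q/2)(-1)^k r^{2k} / (2^{2k+1} k! Γ(k + q/2 + 1))`. -/
noncomputable def gckC' (q k : ℕ) (r : ℝ) : ℝ :=
  (Real.Gamma ((q : ℝ) / 2) * (-1) ^ k * r ^ (2 * k)) /
    (2 ^ (2 * k + 1) * (k.factorial : ℝ) * Real.Gamma ((k : ℝ) + (q : ℝ) / 2 + 1))

/-- The coefficient `Γ(q/2 + 1)(-1)^k r^{2k} / (2^{2k} k! Γ(k + q/2 + 1))`. -/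
noncomputable def hgckC' (q k : ℕ) (r : ℝ) : ℝ :=
  (Real.Gamma ((q : ℝ) / 2 + 1) * (-1) ^ k * r ^ (2 * k)) /
    (2 ^ (2 * k) * (k.factorial : ℝ) * Real.Gamma ((k : ℝ) + (q : ℝ) / 2 + 1))

/-- The monogenic generalized CK-extension `GCK[A₀]`. -/
noncomputable def GCKe (v : ℕ → A) (m p : ℕ) (A₀ : (Fin (p + 1) → ℝ) → A)
    (x : Fin (m + 1) → ℝ) : A :=
  (∑' k : ℕ, hgckC (m - p) k (rad m p x) • lapIterP p k A₀ (projP m p x)) +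
  emb v m (xqpart m p x) *
    ∑' k : ℕ, gckC' (m - p) k (rad m p x) • lapIterP p k (DopP v p A₀) (projP m p x)

/-- The harmonic generalized CK-extension `HGCK[A₀, A₁]`. -/
noncomputable def HGCKe (v : ℕ → A) (m p : ℕ) (A₀ A₁ : (Fin (p + 1) → ℝ) → A)
    (x : Fin (m + 1) → ℝ) : A :=
  (∑' k : ℕ, hgckC (m - p) k (rad m p x) • lapIterP p k A₀ (projP m p x)) +
  emb v m (xqpart m p x) *
    ∑' k : ℕ, hgckC' (m - p) k (rad m p x) • lapIterP p k A₁ (projP m p x)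

/-- The operator `(1/r)∂_r`, extended to `r = 0` by its limit `∂_r²` (on even
functions). -/
noncomputable def T1 (p : ℕ) (G : (Fin (p + 1) → ℝ) × ℝ → A) :
    (Fin (p + 1) → ℝ) × ℝ → A := fun z =>
  if z.2 = 0 then pdSr2 p G z else (z.2)⁻¹ • pdSr p G z

/-- The operator `∂_r ∘ (1/r)`, extended to `r = 0` by its limit `(1/2)∂_r²` (on odd
functions). -/
noncomputable def T2 (p : ℕ) (G : (Fin (p + 1) → ℝ) × ℝ → A) :
    (Fin (p + 1) → ℝ) × ℝ → A := fun z =>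
  if z.2 = 0 then (2 : ℝ)⁻¹ • pdSr2 p G z
  else fderiv ℝ (fun t : ℝ => t⁻¹ • G (z.1, t)) z.2 1

/-- `C_q(k) = (q-1)(q-3)⋯(q-2k+1)`, `C_q(0) = 1`. -/
noncomputable def cq (q k : ℕ) : ℝ :=
  ∏ i ∈ Finset.range k, ((q : ℝ) - (2 * (i : ℝ) + 1))

/-- Double factorial. -/
def dfac : ℕ → ℕ
  | 0 => 1
  | 1 => 1
  | n + 2 => (n + 2) * dfac n

/-- The Fueter-Sce constant `γ_q = (-1)^{(q-1)/2} (q-1)!!/(q-2)!!`. -/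
noncomputable def gammaQ (q : ℕ) : ℝ :=
  (-1 : ℝ) ^ ((q - 1) / 2) * (dfac (q - 1) : ℝ) / (dfac (q - 2) : ℝ)

/-!
For any `f`, the Clifford relations among the spherical units split the Dirac operator in the
directions `x_q` as `x_q D_{x_q} = -E - Γ`, where `E` is the Euler operator in `x_q`; multiplying
by `x_q` and using `x_q² = -r²` turns this into `(D_x - D_ω) f = r⁻² x_q (Γ f)`, so the second
formula follows from the first.  For the first, write `f = F₁ + x_q c` with `c = F₂ / r = f'_s`.
The fields `L_{ij}` are tangent to the spheres on which `(x_p, r)` is constant, hence differentiate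
only the factor `x_q`, and `L_{ij} f = x_i v_j c - x_j v_i c`.  The double sum defining `Γ` is then
evaluated with the Clifford relations.
-/

section CliffordRelations

variable {K M ι : Type*} [CommRing K] [AddCommGroup M] [Module K M]

/-- The operators `T i`, `i ∈ S`, on a module are anticommuting square roots of `-1`.  Working with
operators makes the Clifford calculus available for the left multiplications of a nonassociative
algebra. -/
structure IsCliffordFamily (S : Finset ι) (T : ι → Module.End K M) : Prop where
  apply_apply_self : ∀ i ∈ S, ∀ a, T i (T i a) = -a
  anticomm : ∀ i ∈ S, ∀ j ∈ S, i ≠ j → ∀ a, T i (T j a) = -T j (T i a)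

/-- The Clifford vector with coordinates `x` with respect to the family `T`. -/
def cliffordVector (S : Finset ι) (T : ι → Module.End K M) (x : ι → K) : Module.End K M :=
  ∑ i ∈ S, x i • T i

theorem cliffordVector_apply (S : Finset ι) (T : ι → Module.End K M) (x : ι → K) (a : M) :
    cliffordVector S T x a = ∑ i ∈ S, x i • T i a := by
  simp [cliffordVector]

namespace IsCliffordFamily

variable {S : Finset ι} {T : ι → Module.End K M}

theorem mono {S' : Finset ι} (hT : IsCliffordFamily S T) (hS : S' ⊆ S) : IsCliffordFamily S' T where
  apply_apply_self i hi := hT.apply_apply_self i (hS hi)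
  anticomm i hi j hj := hT.anticomm i (hS hi) j (hS hj)

theorem apply_cliffordVector_add (hT : IsCliffordFamily S T) (x : ι → K) {i : ι} (hi : i ∈ S)
    (a : M) :
    T i (cliffordVector S T x a) + cliffordVector S T x (T i a) = -((2 * x i) • a) := by
  simp only [cliffordVector_apply, map_sum, map_smul, ← Finset.sum_add_distrib]
  rw [Finset.sum_eq_single_of_mem i hi, hT.apply_apply_self i hi]
  · module
  · intro j hj hji
    rw [hT.anticomm i hi j hj hji.symm]
    module

theorem apply_cliffordVector_of_notMem [DecidableEq ι] {i : ι} (hi : i ∉ S)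
    (hT : IsCliffordFamily (insert i S) T) (x : ι → K) (a : M) :
    T i (cliffordVector S T x a) = -cliffordVector S T x (T i a) := by
  simp only [cliffordVector_apply, map_sum, map_smul, ← Finset.sum_neg_distrib]
  refine Finset.sum_congr rfl fun j hj => ?_
  rw [hT.anticomm i (Finset.mem_insert_self i S) j (Finset.mem_insert_of_mem hj)
    (ne_of_mem_of_not_mem hj hi).symm, smul_neg]

theorem cliffordVector_apply_apply_self (hT : IsCliffordFamily S T) (x : ι → K) (a : M) :
    cliffordVector S T x (cliffordVector S T x a) = -((∑ i ∈ S, x i ^ 2) • a) := by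
  classical
  induction S using Finset.induction_on with
  | empty => simp [cliffordVector_apply]
  | insert i S hi ih =>
    have hsplit : cliffordVector (insert i S) T x = x i • T i + cliffordVector S T x :=
      Finset.sum_insert hi
    have hii := hT.apply_apply_self i (Finset.mem_insert_self i S) a
    simp only [hsplit, LinearMap.add_apply, LinearMap.smul_apply, map_add, map_smul, hii,
      hT.apply_cliffordVector_of_notMem hi, ih (hT.mono (Finset.subset_insert i S)),
      Finset.sum_insert hi]
    module

/-- With `g i = ∂_i f` this is the identity `Γ = -x D - E` relating the spherical Dirac operator,
the Dirac operator and the Euler operator. -/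
theorem sum_sum_apply_smul_sub_smul (hT : IsCliffordFamily S T) (x : ι → K) (g : ι → M) :
    ∑ i ∈ S, ∑ j ∈ S, T i (T j (x i • g j - x j • g i)) =
      (2 : K) • (cliffordVector S T x (∑ j ∈ S, T j (g j)) + ∑ i ∈ S, x i • g i) := by
  have hswap : ∀ i ∈ S, T i (cliffordVector S T x (g i)) =
      -cliffordVector S T x (T i (g i)) - (2 : K) • x i • g i := fun i hi => by
    rw [smul_smul, sub_eq_add_neg, ← hT.apply_cliffordVector_add x hi]
    abel
  calc ∑ i ∈ S, ∑ j ∈ S, T i (T j (x i • g j - x j • g i))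
      = ∑ i ∈ S, (x i • T i (∑ j ∈ S, T j (g j)) - T i (cliffordVector S T x (g i))) := by
        simp only [cliffordVector_apply, map_sub, map_smul, map_sum, Finset.smul_sum,
          Finset.sum_sub_distrib]
    _ = ∑ i ∈ S, (x i • T i (∑ j ∈ S, T j (g j)) + cliffordVector S T x (T i (g i)) +
          (2 : K) • x i • g i) := by
        refine Finset.sum_congr rfl fun i hi => ?_
        rw [hswap i hi]
        abel
    _ = (2 : K) • (cliffordVector S T x (∑ j ∈ S, T j (g j)) + ∑ i ∈ S, x i • g i) := by
        rw [Finset.sum_add_distrib, Finset.sum_add_distrib, ← cliffordVector_apply, ← map_sum,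
          ← Finset.smul_sum]
        module

theorem sum_sum_apply_smul_apply_sub (hT : IsCliffordFamily S T) (x : ι → K) (a : M) :
    ∑ i ∈ S, ∑ j ∈ S, T i (T j (x i • T j a - x j • T i a)) =
      (2 * (1 - (S.card : K))) • cliffordVector S T x a := by
  have hsum : ∑ j ∈ S, T j (T j a) = -((S.card : K) • a) := by
    rw [Finset.sum_congr rfl fun j hj => hT.apply_apply_self j hj a, Finset.sum_const,
      Nat.cast_smul_eq_nsmul, smul_neg]
  rw [hT.sum_sum_apply_smul_sub_smul x (fun i => T i a), hsum, ← cliffordVector_apply, map_neg,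
    map_smul]
  module

end IsCliffordFamily

end CliffordRelations

section Coordinates

variable {m p : ℕ}

/-- The indices `p + 1, …, m` of the coordinates of `x_q`. -/
def sphericalIdx (m p : ℕ) : Finset (Fin (m + 1)) := {s | p < (s : ℕ)}

theorem mem_sphericalIdx {s : Fin (m + 1)} : s ∈ sphericalIdx m p ↔ p < (s : ℕ) := by
  simp [sphericalIdx]

theorem card_sphericalIdx (m p : ℕ) : (sphericalIdx m p).card = m - p := by
  have hIoc : (sphericalIdx m p).map Fin.valEmbedding = Finset.Ioc p m := by
    ext s
    simp [mem_sphericalIdx, Fin.exists_iff, and_comm]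
  rw [← Finset.card_map Fin.valEmbedding, hIoc, Nat.card_Ioc]

theorem xqpart_smul (r : ℝ) (x : Fin (m + 1) → ℝ) : xqpart m p (r • x) = r • xqpart m p x := by
  ext s
  simp [xqpart]

theorem xqpart_xqpart (x : Fin (m + 1) → ℝ) : xqpart m p (xqpart m p x) = xqpart m p x := by
  ext s
  simp +contextual [xqpart]

theorem xqpart_eq_self_iff {x : Fin (m + 1) → ℝ} :
    xqpart m p x = x ↔ ∀ s : Fin (m + 1), (s : ℕ) ≤ p → x s = 0 := by
  simp [funext_iff, xqpart, eq_comm]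

theorem xppart_add_xqpart (x : Fin (m + 1) → ℝ) : xppart m p x + xqpart m p x = x := by
  ext s
  by_cases hs : (s : ℕ) ≤ p <;> simp [xppart, xqpart, hs]

theorem xppart_sub_xqpart (x : Fin (m + 1) → ℝ) : xppart m p x - xqpart m p x = reflP m p x := by
  ext s
  by_cases hs : (s : ℕ) ≤ p <;> simp [xppart, xqpart, reflP, hs]

theorem injP_projP (x : Fin (m + 1) → ℝ) : injP m p (projP m p x) = xppart m p x := by
  ext s
  by_cases hs : (s : ℕ) ≤ p <;> simp [injP, projP, xppart, hs, s.is_le]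

theorem projP_injP (hp : p ≤ m) (y : Fin (p + 1) → ℝ) : projP m p (injP m p y) = y := by
  ext s
  have hs : (s : ℕ) < m + 1 := by omega
  simp [projP, injP, hs, s.is_le]

theorem projP_add_of_xqpart_eq_self (x : Fin (m + 1) → ℝ) {w : Fin (m + 1) → ℝ}
    (hw : xqpart m p w = w) : projP m p (x + w) = projP m p x := by
  ext s
  simp [projP, xqpart_eq_self_iff.1 hw, s.is_le]

theorem xqpart_pt {w : Fin (m + 1) → ℝ} (hw : xqpart m p w = w) (y : Fin (p + 1) → ℝ) (r : ℝ) :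
    xqpart m p (pt m p w y r) = r • w := by
  ext s
  by_cases hs : (s : ℕ) ≤ p
  · simp [xqpart, hs, xqpart_eq_self_iff.1 hw s hs]
  · simp [xqpart, hs, pt, injP]

theorem projP_pt (hp : p ≤ m) {w : Fin (m + 1) → ℝ} (hw : xqpart m p w = w)
    (y : Fin (p + 1) → ℝ) (r : ℝ) : projP m p (pt m p w y r) = y := by
  rw [pt, projP_add_of_xqpart_eq_self _ (by rw [xqpart_smul, hw]), projP_injP hp]

theorem sum_xqpart_smul {E : Type*} [AddCommGroup E] [Module ℝ E] (x : Fin (m + 1) → ℝ)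
    (g : Fin (m + 1) → E) : ∑ s, xqpart m p x s • g s = ∑ s ∈ sphericalIdx m p, x s • g s := by
  rw [sphericalIdx, Finset.sum_filter]
  refine Finset.sum_congr rfl fun s _ => ?_
  by_cases hs : (s : ℕ) ≤ p <;> simp [xqpart, hs]

theorem rad_eq_sqrt (x : Fin (m + 1) → ℝ) :
    rad m p x = √(∑ s ∈ sphericalIdx m p, x s ^ 2) := by
  rw [rad, sphericalIdx, Finset.sum_filter]
  congr! 2 with s
  by_cases hs : (s : ℕ) ≤ p <;> simp [xqpart, hs]

theorem rad_nonneg (x : Fin (m + 1) → ℝ) : 0 ≤ rad m p x :=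
  Real.sqrt_nonneg _

theorem rad_sq (x : Fin (m + 1) → ℝ) : rad m p x ^ 2 = ∑ s ∈ sphericalIdx m p, x s ^ 2 := by
  rw [rad_eq_sqrt, Real.sq_sqrt (Finset.sum_nonneg fun s _ => sq_nonneg (x s))]

theorem rad_xqpart (x : Fin (m + 1) → ℝ) : rad m p (xqpart m p x) = rad m p x := by
  rw [rad, xqpart_xqpart, rad]

theorem rad_smul (r : ℝ) (x : Fin (m + 1) → ℝ) : rad m p (r • x) = |r| * rad m p x := by
  simp only [rad_eq_sqrt, Pi.smul_apply, smul_eq_mul, mul_pow, ← Finset.mul_sum]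
  rw [Real.sqrt_mul (sq_nonneg r), Real.sqrt_sq_eq_abs]

theorem rad_pt {w : Fin (m + 1) → ℝ} (hw : xqpart m p w = w) (y : Fin (p + 1) → ℝ) (r : ℝ) :
    rad m p (pt m p w y r) = |r| * rad m p w := by
  rw [← rad_xqpart, xqpart_pt hw, rad_smul]

theorem xqpart_normq (x : Fin (m + 1) → ℝ) : xqpart m p (normq m p x) = normq m p x := by
  rw [normq, xqpart_smul, xqpart_xqpart]

theorem rad_normq {x : Fin (m + 1) → ℝ} (hx : rad m p x ≠ 0) : rad m p (normq m p x) = 1 := by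
  rw [normq, rad_smul, rad_xqpart, abs_inv, abs_of_nonneg (rad_nonneg x), inv_mul_cancel₀ hx]

theorem pt_normq {x : Fin (m + 1) → ℝ} (hx : rad m p x ≠ 0) :
    pt m p (normq m p x) (projP m p x) (rad m p x) = x := by
  rw [pt, normq, injP_projP, smul_inv_smul₀ hx, xppart_add_xqpart]

theorem pt_normq_neg {x : Fin (m + 1) → ℝ} (hx : rad m p x ≠ 0) :
    pt m p (normq m p x) (projP m p x) (-rad m p x) = reflP m p x := by
  rw [pt, normq, injP_projP, neg_smul, smul_inv_smul₀ hx, ← sub_eq_add_neg, xppart_sub_xqpart]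

end Coordinates

section Algebra

variable (A) in
/-- `A` is a unital, not necessarily associative, real algebra satisfying the left alternative
law. -/
structure IsLeftAlternativeAlg : Prop where
  mul_add' : ∀ a b c : A, a * (b + c) = a * b + a * c
  add_mul' : ∀ a b c : A, (a + b) * c = a * c + b * c
  smul_mul' : ∀ (r : ℝ) (a b : A), (r • a) * b = r • (a * b)
  mul_smul' : ∀ (r : ℝ) (a b : A), a * (r • b) = r • (a * b)
  one_mul' : ∀ a : A, 1 * a = a
  mul_one' : ∀ a : A, a * 1 = a
  alt_left : ∀ a b : A, a * (a * b) = a * a * b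

theorem IsAltStarAlg.isLeftAlternativeAlg {conj : A → A} (H : IsAltStarAlg A conj) :
    IsLeftAlternativeAlg A where
  mul_add' := H.mul_add'
  add_mul' := H.add_mul'
  smul_mul' := H.smul_mul'
  mul_smul' := H.mul_smul'
  one_mul' := H.one_mul'
  mul_one' := H.mul_one'
  alt_left := H.alt_left

namespace IsLeftAlternativeAlg

/-- Left multiplication as a linear map into the (associative) algebra of endomorphisms. -/
def leftMul (hA : IsLeftAlternativeAlg A) : A →ₗ[ℝ] Module.End ℝ A :=
  LinearMap.mk₂ ℝ (· * ·) hA.add_mul' hA.smul_mul' hA.mul_add' hA.mul_smul'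

theorem leftMul_apply (hA : IsLeftAlternativeAlg A) (a b : A) : hA.leftMul a b = a * b := rfl

theorem leftMul_apply_apply (hA : IsLeftAlternativeAlg A) (a b : A) :
    hA.leftMul a (hA.leftMul a b) = hA.leftMul (hA.leftMul a a) b :=
  hA.alt_left a b

theorem leftMul_one (hA : IsLeftAlternativeAlg A) : hA.leftMul 1 = 1 :=
  LinearMap.ext hA.one_mul'

theorem leftMul_apply_add_swap (hA : IsLeftAlternativeAlg A) (a b c : A) :
    hA.leftMul a (hA.leftMul b c) + hA.leftMul b (hA.leftMul a c) =
      hA.leftMul (a * b + b * a) c := by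
  have h := hA.leftMul_apply_apply (a + b) c
  simp only [map_add, LinearMap.add_apply, hA.leftMul_apply_apply a c,
    hA.leftMul_apply_apply b c, hA.leftMul_apply a b, hA.leftMul_apply b a] at h
  rw [map_add, LinearMap.add_apply]
  rw [← sub_eq_zero] at h ⊢
  rw [← h]
  abel

/-- Left multiplication by a fixed element as a continuous linear map. -/
def leftMulL [SeparatelyContinuousMul A] (hA : IsLeftAlternativeAlg A) (a : A) : A →L[ℝ] A :=
  ⟨hA.leftMul a, continuous_const_mul a⟩

theorem leftMulL_apply [SeparatelyContinuousMul A] (hA : IsLeftAlternativeAlg A) (a b : A) :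
    hA.leftMulL a b = hA.leftMul a b := rfl

end IsLeftAlternativeAlg

theorem IsAltStarAlg.separatelyContinuousMul {conj : A → A} (H : IsAltStarAlg A conj) :
    SeparatelyContinuousMul A where
  continuous_const_mul {a} :=
    haveI := H.finDim
    (H.isLeftAlternativeAlg.leftMul a).continuous_of_finiteDimensional
  continuous_mul_const {a} :=
    haveI := H.finDim
    (H.isLeftAlternativeAlg.leftMul.flip a).continuous_of_finiteDimensional

/-- The elements `v_{p+1}, …, v_m`, which span the `x_q`-directions, are anticommuting square
roots of `-1`. -/
structure IsSphericalUnits (v : ℕ → A) (m p : ℕ) : Prop where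
  mul_self : ∀ s ∈ Set.Ioc p m, v s * v s = -1
  anticomm : ∀ s ∈ Set.Ioc p m, ∀ t ∈ Set.Ioc p m, s ≠ t → v s * v t = -(v t * v s)

theorem IsHypBasis.isSphericalUnits {conj : A → A} (hA : IsLeftAlternativeAlg A) {v : ℕ → A} {m : ℕ}
    (hv : IsHypBasis A conj v m) (p : ℕ) : IsSphericalUnits v m p where
  mul_self s hs := by
    have hconj : conj (v s) = -v s :=
      (neg_eq_of_add_eq_zero_right (hv.trace_zero s (by grind) hs.2)).symm
    have hnorm := hv.norm_one s (by grind) hs.2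
    rw [hconj, ← hA.leftMul_apply, map_neg, hA.leftMul_apply] at hnorm
    rw [← hnorm, neg_neg]
  anticomm s hs t ht := hv.anticomm s t (by grind) hs.2 (by grind) ht.2

theorem IsHypBasis.nontrivial {conj : A → A} {v : ℕ → A} {m : ℕ} (hv : IsHypBasis A conj v m) :
    Nontrivial A :=
  nontrivial_of_ne (v (0 : Fin (m + 1))) 0 (hv.indep.ne_zero 0)

theorem IsSphericalUnits.isCliffordFamily {v : ℕ → A} {m p : ℕ} (hv : IsSphericalUnits v m p)
    (hA : IsLeftAlternativeAlg A) :
    IsCliffordFamily (sphericalIdx m p) fun s => hA.leftMul (v s) where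
  apply_apply_self s hs a := by
    rw [hA.leftMul_apply_apply, hA.leftMul_apply (v s) (v s),
      hv.mul_self s ⟨mem_sphericalIdx.1 hs, s.is_le⟩, map_neg, hA.leftMul_one]
    rfl
  anticomm s hs t ht hst a := by
    rw [eq_neg_iff_add_eq_zero, hA.leftMul_apply_add_swap,
      hv.anticomm s ⟨mem_sphericalIdx.1 hs, s.is_le⟩ t ⟨mem_sphericalIdx.1 ht, t.is_le⟩
        (Fin.val_ne_of_ne hst), neg_add_cancel, map_zero, LinearMap.zero_apply]

omit [Mul A] [One A] in
theorem emb_smul (v : ℕ → A) {m : ℕ} (r : ℝ) (x : Fin (m + 1) → ℝ) :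
    emb v m (r • x) = r • emb v m x := by
  simp [emb, Finset.smul_sum, smul_smul]

theorem leftMul_emb_xqpart (hA : IsLeftAlternativeAlg A) (v : ℕ → A) (m p : ℕ)
    (x : Fin (m + 1) → ℝ) :
    hA.leftMul (emb v m (xqpart m p x)) =
      cliffordVector (sphericalIdx m p) (fun s => hA.leftMul (v s)) x := by
  simp only [emb, sum_xqpart_smul, map_sum, map_smul, cliffordVector]

theorem IsSphericalUnits.leftMul_emb_xqpart_apply_apply_self {v : ℕ → A} {m p : ℕ}
    (hv : IsSphericalUnits v m p) (hA : IsLeftAlternativeAlg A) (x : Fin (m + 1) → ℝ) (a : A) :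
    hA.leftMul (emb v m (xqpart m p x)) (hA.leftMul (emb v m (xqpart m p x)) a) =
      -(rad m p x ^ 2 • a) := by
  rw [leftMul_emb_xqpart, (hv.isCliffordFamily hA).cliffordVector_apply_apply_self, rad_sq]

theorem IsSphericalUnits.mem_Sph_iff [Nontrivial A] {v : ℕ → A} {m p : ℕ}
    (hv : IsSphericalUnits v m p) (hA : IsLeftAlternativeAlg A) {w : Fin (m + 1) → ℝ} :
    w ∈ Sph v m p ↔ xqpart m p w = w ∧ rad m p w = 1 := by
  have hone : (1 : A) ≠ 0 := fun h => by
    obtain ⟨a, ha⟩ := exists_ne (0 : A)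
    rw [← hA.one_mul' a, h, ← hA.leftMul_apply, map_zero] at ha
    exact ha rfl
  rw [Sph, Set.mem_ofPred_eq, ← xqpart_eq_self_iff]
  refine and_congr_right fun hw => ?_
  have hsq := hv.leftMul_emb_xqpart_apply_apply_self hA w 1
  simp only [hw, hA.leftMul_apply, hA.mul_one'] at hsq
  rw [hsq, neg_inj, ← one_smul ℝ (1 : A), smul_smul, mul_one, smul_left_inj hone,
    pow_eq_one_iff_of_nonneg (rad_nonneg w) two_ne_zero]

theorem IsSphericalUnits.normq_mem_Sph [Nontrivial A] {v : ℕ → A} {m p : ℕ}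
    (hv : IsSphericalUnits v m p) (hA : IsLeftAlternativeAlg A) {x : Fin (m + 1) → ℝ}
    (hx : rad m p x ≠ 0) : normq m p x ∈ Sph v m p :=
  (hv.mem_Sph_iff hA).2 ⟨xqpart_normq x, rad_normq hx⟩

theorem IsSphericalUnits.mem_of_mem_OmegaD [Nontrivial A] {v : ℕ → A} {m p : ℕ}
    (hv : IsSphericalUnits v m p) (hA : IsLeftAlternativeAlg A) (hp : p ≤ m)
    {D : Set ((Fin (p + 1) → ℝ) × ℝ)} (hD : ∀ z ∈ D, reflD p z ∈ D) {x : Fin (m + 1) → ℝ}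
    (hx : x ∈ OmegaD v m p D) : (projP m p x, rad m p x) ∈ D := by
  obtain ⟨w, hw, z, hz, rfl⟩ := hx
  obtain ⟨hwq, hwr⟩ := (hv.mem_Sph_iff hA).1 hw
  rw [projP_pt hp hwq, rad_pt hwq, hwr, mul_one]
  rcases abs_choice z.2 with h | h <;> rw [h]
  · exact hz
  · exact hD z hz

end Algebra

section Slices

variable {m p : ℕ}

variable (m p) in
/-- The parametrization `(x_p, r) ↦ x_p + rω` of the slice through `ω`, as a continuous linear
map. -/
noncomputable def ptL (w : Fin (m + 1) → ℝ) :
    (Fin (p + 1) → ℝ) × ℝ →L[ℝ] (Fin (m + 1) → ℝ) :=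
  LinearMap.toContinuousLinearMap
    { toFun z := pt m p w z.1 z.2
      map_add' y z := by
        ext s
        by_cases hs : (s : ℕ) < p + 1 <;> simp [pt, injP, hs] <;> ring
      map_smul' r z := by
        ext s
        by_cases hs : (s : ℕ) < p + 1 <;> simp [pt, injP, hs] <;> ring }

theorem ptL_apply (w : Fin (m + 1) → ℝ) (z : (Fin (p + 1) → ℝ) × ℝ) :
    ptL m p w z = pt m p w z.1 z.2 := rfl

theorem ptL_single (hp : p ≤ m) (w : Fin (m + 1) → ℝ) (s : Fin (p + 1)) :
    ptL m p w (Pi.single s 1, 0) = Pi.single (Fin.castLE (by omega) s) 1 := by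
  ext t
  by_cases ht : (t : ℕ) < p + 1
  · simp [ptL_apply, pt, injP, Pi.single_apply, Fin.ext_iff, ht]
  · have hts : (t : ℕ) ≠ s := by omega
    simp [ptL_apply, pt, injP, Fin.ext_iff, ht, hts]

theorem ptL_zero_one (w : Fin (m + 1) → ℝ) : ptL m p w (0, 1) = w := by
  ext t
  simp [ptL_apply, pt, injP]

variable {f : (Fin (m + 1) → ℝ) → A}

omit [Mul A] [One A] in
theorem fderiv_sliceFun {w : Fin (m + 1) → ℝ} {z : (Fin (p + 1) → ℝ) × ℝ}
    (hf : DifferentiableAt ℝ f (pt m p w z.1 z.2)) :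
    fderiv ℝ (sliceFun m p f w) z = (fderiv ℝ f (pt m p w z.1 z.2)).comp (ptL m p w) :=
  (hf.hasFDerivAt.comp z (ptL m p w).hasFDerivAt).fderiv

omit [Mul A] [One A] in
theorem fderiv_apply_xqpart (x : Fin (m + 1) → ℝ) :
    fderiv ℝ f x (xqpart m p x) = ∑ s ∈ sphericalIdx m p, x s • pdF m s f x := by
  conv_lhs => rw [pi_eq_sum_univ' (xqpart m p x)]
  simp only [map_sum, map_smul, pdF, sum_xqpart_smul]

end Slices

section DiracOperators

variable {v : ℕ → A} {m p : ℕ} {f : (Fin (m + 1) → ℝ) → A} {x : Fin (m + 1) → ℝ}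

omit [One A] in
theorem Dop_eq_add :
    Dop v m 0 m f x = Dop v m 0 p f x + Dop v m (p + 1) m f x := by
  simp only [Dop, ← Finset.sum_add_distrib]
  refine Finset.sum_congr rfl fun s _ => ?_
  by_cases hs : (s : ℕ) ≤ p
  · simp [hs, s.is_le]
  · simp [hs, s.is_le, Nat.succ_le_of_lt (not_le.1 hs)]

omit [One A] in
theorem Dop_succ_eq_sum :
    Dop v m (p + 1) m f x = ∑ s ∈ sphericalIdx m p, v s * pdF m s f x := by
  simp [Dop, sphericalIdx, Finset.sum_filter, Fin.is_le]

omit [One A] in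
theorem Dop_zero_eq_sum (hp : p ≤ m) :
    Dop v m 0 p f x = ∑ s : Fin (p + 1), v s * pdF m (Fin.castLE (by omega) s) f x := by
  have hIic : Finset.Iic (Fin.castLE (by omega) (Fin.last p)) =
      ({s | (s : ℕ) ≤ p} : Finset (Fin (m + 1))) := by
    ext s
    simp [Fin.le_def]
  simp only [Dop, zero_le, true_and]
  rw [← Finset.sum_filter, ← hIic, Fin.sum_Iic_castLE, ← Fin.top_eq_last, Finset.Iic_top]
  rfl

theorem sphericalGamma_eq_sum (hA : IsLeftAlternativeAlg A) :
    sphericalGamma v m p f x = -(2 : ℝ)⁻¹ • ∑ i ∈ sphericalIdx m p, ∑ j ∈ sphericalIdx m p,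
      hA.leftMul (v i) (hA.leftMul (v j) (x i • pdF m j f x - x j • pdF m i f x)) := by
  simp only [sphericalGamma, sphericalIdx, Finset.sum_filter, ite_and, hA.leftMul_apply,
    Finset.sum_ite_irrel, Finset.sum_const_zero]

theorem sphericalGamma_eq (hA : IsLeftAlternativeAlg A) (hv : IsSphericalUnits v m p) :
    sphericalGamma v m p f x =
      -(emb v m (xqpart m p x) * Dop v m (p + 1) m f x + fderiv ℝ f x (xqpart m p x)) := by
  rw [sphericalGamma_eq_sum hA,
    (hv.isCliffordFamily hA).sum_sum_apply_smul_sub_smul x fun s => pdF m s f x,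
    ← leftMul_emb_xqpart hA, Dop_succ_eq_sum, fderiv_apply_xqpart, neg_smul,
    inv_smul_smul₀ two_ne_zero]
  rfl

theorem DomCRat_eq (hA : IsLeftAlternativeAlg A) (hp : p ≤ m) (hx : rad m p x ≠ 0)
    (hf : DifferentiableAt ℝ f x) :
    DomCRat v m p f x = Dop v m 0 p f x +
      (rad m p x ^ 2)⁻¹ • (emb v m (xqpart m p x) * fderiv ℝ f x (xqpart m p x)) := by
  have hderiv := fderiv_sliceFun (z := (projP m p x, rad m p x)) (by rwa [pt_normq hx])
  simp only [pt_normq hx] at hderiv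
  simp only [DomCRat, DomCR, DopSx, pdSx, pdSr, hderiv, ContinuousLinearMap.comp_apply,
    ptL_single hp, ptL_zero_one, Dop_zero_eq_sum hp, pdF]
  rw [normq, emb_smul, map_smul, hA.smul_mul', hA.mul_smul', smul_smul, sq, mul_inv]

theorem Dop_sub_DomCRat (hA : IsLeftAlternativeAlg A) (hv : IsSphericalUnits v m p) (hp : p ≤ m)
    (hx : rad m p x ≠ 0) (hf : DifferentiableAt ℝ f x) :
    Dop v m 0 m f x - DomCRat v m p f x =
      (rad m p x ^ 2)⁻¹ • (emb v m (xqpart m p x) * sphericalGamma v m p f x) := by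
  have hsq := hv.leftMul_emb_xqpart_apply_apply_self hA x (Dop v m (p + 1) m f x)
  rw [Dop_eq_add (p := p), DomCRat_eq hA hp hx hf, sphericalGamma_eq hA hv]
  simp only [← hA.leftMul_apply (emb v m (xqpart m p x)), map_neg, map_add, hsq, neg_add, neg_neg,
    smul_add, smul_neg, inv_smul_smul₀ (pow_ne_zero 2 hx)]
  abel

end DiracOperators

section TangentialDerivative

theorem hasFDerivAt_add_sum_smul_comp {ι E F G : Type*} [NormedAddCommGroup E]
    [NormedSpace ℝ E] [NormedAddCommGroup F] [NormedSpace ℝ F] [NormedAddCommGroup G]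
    [NormedSpace ℝ G] (S : Finset ι) (ℓ : ι → E →L[ℝ] ℝ) {z : E → F} {z' : E →L[ℝ] F} {x : E}
    {g : F → G} {g' : F →L[ℝ] G} {h : ι → F → G} {h' : ι → F →L[ℝ] G} (hz : HasFDerivAt z z' x)
    (hg : HasFDerivAt g g' (z x)) (hh : ∀ s ∈ S, HasFDerivAt (h s) (h' s) (z x)) :
    HasFDerivAt (fun y => g (z y) + ∑ s ∈ S, ℓ s y • h s (z y))
      (g'.comp z' + ∑ s ∈ S, (ℓ s x • (h' s).comp z' + (ℓ s).smulRight (h s (z x)))) x :=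
  (hg.comp x hz).add <| HasFDerivAt.fun_sum fun s hs =>
    (ℓ s).hasFDerivAt.smul ((hh s hs).comp x hz)

variable {m p : ℕ}

variable (m p) in
/-- The point `x' = (x_p, r)` of the parameter domain below `x = x_p + rω`. -/
noncomputable def sliceCoord (x : Fin (m + 1) → ℝ) : (Fin (p + 1) → ℝ) × ℝ :=
  (projP m p x, rad m p x)

theorem hasFDerivAt_rad {x : Fin (m + 1) → ℝ} (hx : rad m p x ≠ 0) :
    HasFDerivAt (rad m p) ((rad m p x)⁻¹ •
      ∑ s ∈ sphericalIdx m p, x s • ContinuousLinearMap.proj (R := ℝ) (φ := fun _ => ℝ) s) x := by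
  have hsum : HasFDerivAt (fun y : Fin (m + 1) → ℝ => ∑ s ∈ sphericalIdx m p, y s ^ 2)
      (∑ s ∈ sphericalIdx m p,
        (2 * x s) • ContinuousLinearMap.proj (R := ℝ) (φ := fun _ => ℝ) s) x :=
    HasFDerivAt.fun_sum fun s _ => by
      simpa using (ContinuousLinearMap.proj (R := ℝ) (φ := fun _ => ℝ) s).hasFDerivAt.pow 2
  have hne : ∑ s ∈ sphericalIdx m p, x s ^ 2 ≠ 0 := by
    rw [← rad_sq]
    exact pow_ne_zero 2 hx
  have hsqrt := hsum.sqrt hne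
  simp only [← rad_eq_sqrt] at hsqrt
  refine hsqrt.congr_fderiv ?_
  simp only [mul_smul, ← Finset.smul_sum]
  rw [smul_smul]
  congr 1
  field_simp

theorem hasFDerivAt_projP (hp : p ≤ m) (x : Fin (m + 1) → ℝ) :
    HasFDerivAt (projP m p) (ContinuousLinearMap.pi fun s => ContinuousLinearMap.proj (R := ℝ)
      (φ := fun _ => ℝ) (Fin.castLE (by omega : p + 1 ≤ m + 1) s)) x := by
  refine (ContinuousLinearMap.hasFDerivAt _).congr_of_eventuallyEq (.of_forall fun y => ?_)
  ext s
  have hs : (s : ℕ) < m + 1 := by omega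
  simp [projP, hs, Fin.castLE]

theorem differentiableAt_sliceCoord (hp : p ≤ m) {x : Fin (m + 1) → ℝ} (hx : rad m p x ≠ 0) :
    DifferentiableAt ℝ (sliceCoord m p) x :=
  ((hasFDerivAt_projP hp x).prodMk (hasFDerivAt_rad hx)).differentiableAt

theorem fderiv_sliceCoord_apply_eq_zero (hp : p ≤ m) {x u : Fin (m + 1) → ℝ} (hx : rad m p x ≠ 0)
    (hu : xqpart m p u = u) (hxu : ∑ s ∈ sphericalIdx m p, x s * u s = 0) :
    fderiv ℝ (sliceCoord m p) x u = 0 := by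
  have hderiv := (hasFDerivAt_projP hp x).prodMk (hasFDerivAt_rad hx)
  rw [show sliceCoord m p = fun y => (projP m p y, rad m p y) from rfl, hderiv.fderiv]
  ext s
  · simp [xqpart_eq_self_iff.1 hu, s.is_le]
  · simp [hxu]

end TangentialDerivative

section InducedFunctions

variable {v : ℕ → A} {m p : ℕ} {D : Set ((Fin (p + 1) → ℝ) × ℝ)}
  {F₁ F₂ : (Fin (p + 1) → ℝ) × ℝ → A} {f : (Fin (m + 1) → ℝ) → A} {x : Fin (m + 1) → ℝ}

namespace Induced

theorem apply_eq [Nontrivial A] (hind : Induced v m p D F₁ F₂ f) (hA : IsLeftAlternativeAlg A)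
    (hv : IsSphericalUnits v m p) (hx : rad m p x ≠ 0) (hxD : sliceCoord m p x ∈ D) :
    f x = F₁ (sliceCoord m p x) + emb v m (normq m p x) * F₂ (sliceCoord m p x) := by
  conv_lhs => rw [← pt_normq hx]
  exact hind _ (hv.normq_mem_Sph hA hx) _ hxD

theorem apply_reflP [Nontrivial A] (hind : Induced v m p D F₁ F₂ f)
    (hstem : IsStem p D F₁ F₂) (hDrefl : ∀ z ∈ D, reflD p z ∈ D) (hA : IsLeftAlternativeAlg A)
    (hv : IsSphericalUnits v m p) (hx : rad m p x ≠ 0) (hxD : sliceCoord m p x ∈ D) :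
    f (reflP m p x) =
      F₁ (sliceCoord m p x) - emb v m (normq m p x) * F₂ (sliceCoord m p x) := by
  obtain ⟨heven, hodd⟩ := hstem _ hxD
  have hval := hind _ (hv.normq_mem_Sph hA hx) _ (hDrefl _ hxD)
  rw [heven, hodd, ← hA.leftMul_apply, map_neg, hA.leftMul_apply, ← sub_eq_add_neg] at hval
  rw [← pt_normq_neg hx]
  exact hval

theorem sder_eq [Nontrivial A] (hind : Induced v m p D F₁ F₂ f)
    (hstem : IsStem p D F₁ F₂) (hDrefl : ∀ z ∈ D, reflD p z ∈ D) (hA : IsLeftAlternativeAlg A)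
    (hv : IsSphericalUnits v m p) (hx : rad m p x ≠ 0) (hxD : sliceCoord m p x ∈ D) :
    sder v m p f x = (rad m p x)⁻¹ • F₂ (sliceCoord m p x) := by
  have hsq := hv.leftMul_emb_xqpart_apply_apply_self hA x (F₂ (sliceCoord m p x))
  have hdiff : f x - f (reflP m p x) =
      (2 * (rad m p x)⁻¹) • (emb v m (xqpart m p x) * F₂ (sliceCoord m p x)) := by
    rw [hind.apply_eq hA hv hx hxD, hind.apply_reflP hstem hDrefl hA hv hx hxD, normq, emb_smul,
      hA.smul_mul']
    module
  simp only [hA.leftMul_apply] at hsq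
  rw [sder, hdiff, hA.mul_smul', hsq, smul_neg, smul_smul, neg_smul_neg, smul_smul]
  congr 1
  field_simp

theorem eventuallyEq [Nontrivial A] (hind : Induced v m p D F₁ F₂ f) (hA : IsLeftAlternativeAlg A)
    (hv : IsSphericalUnits v m p) (hp : p ≤ m) (hD : IsOpen D) (hx : rad m p x ≠ 0)
    (hxD : sliceCoord m p x ∈ D) :
    f =ᶠ[𝓝 x] fun y => F₁ (sliceCoord m p y) + ∑ s ∈ sphericalIdx m p,
      ContinuousLinearMap.proj (R := ℝ) (φ := fun _ => ℝ) s y •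
        (v s * ((sliceCoord m p y).2⁻¹ • F₂ (sliceCoord m p y))) := by
  have hcont := (differentiableAt_sliceCoord hp hx).continuousAt
  filter_upwards [(hasFDerivAt_rad hx).continuousAt.eventually_ne hx, hcont (hD.mem_nhds hxD)]
    with y hy hyD
  rw [hind.apply_eq hA hv hy hyD, normq, emb_smul, hA.smul_mul', ← hA.mul_smul',
    ← hA.leftMul_apply (emb _ _ _), leftMul_emb_xqpart, cliffordVector_apply]
  rfl

theorem exists_hasFDerivAt_tangent [Nontrivial A] [SeparatelyContinuousMul A]
    (hind : Induced v m p D F₁ F₂ f) (hA : IsLeftAlternativeAlg A)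
    (hv : IsSphericalUnits v m p) (hp : p ≤ m) (hD : IsOpen D) (hF₁ : DifferentiableOn ℝ F₁ D)
    (hF₂ : DifferentiableOn ℝ F₂ D) (hx : rad m p x ≠ 0) (hxD : sliceCoord m p x ∈ D) :
    ∃ f' : (Fin (m + 1) → ℝ) →L[ℝ] A, HasFDerivAt f f' x ∧ ∀ u, xqpart m p u = u →
      ∑ s ∈ sphericalIdx m p, x s * u s = 0 →
        f' u = emb v m u * ((rad m p x)⁻¹ • F₂ (sliceCoord m p x)) := by
  have hF₁x := (hF₁.differentiableAt (hD.mem_nhds hxD)).hasFDerivAt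
  have hF₂x := hF₂.differentiableAt (hD.mem_nhds hxD)
  have hc : DifferentiableAt ℝ (fun z : (Fin (p + 1) → ℝ) × ℝ => z.2⁻¹ • F₂ z)
      (sliceCoord m p x) := by
    have hr : (sliceCoord m p x).2 ≠ 0 := hx
    fun_prop (disch := exact hr)
  have hderiv := hasFDerivAt_add_sum_smul_comp (sphericalIdx m p)
    (fun s => ContinuousLinearMap.proj (R := ℝ) (φ := fun _ => ℝ) s)
    (differentiableAt_sliceCoord hp hx).hasFDerivAt hF₁x
    fun s _ => (hA.leftMulL (v s)).hasFDerivAt.comp (sliceCoord m p x) hc.hasFDerivAt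
  refine ⟨_, hderiv.congr_of_eventuallyEq (hind.eventuallyEq hA hv hp hD hx hxD), ?_⟩
  intro u hu hxu
  have hemb := leftMul_emb_xqpart hA v m p u
  rw [hu] at hemb
  rw [← hA.leftMul_apply, hemb, cliffordVector_apply]
  simp [fderiv_sliceCoord_apply_eq_zero hp hx hu hxu, sliceCoord,
    hA.leftMulL_apply]

end Induced

end InducedFunctions

section AngularFields

variable {m p : ℕ}

/-- The vector field `x_i ∂_{x_j} - x_j ∂_{x_i}`, which differentiates along `L_{ij}`. -/
def angularField {ι : Type*} [DecidableEq ι] (i j : ι) (x : ι → ℝ) : ι → ℝ :=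
  x i • Pi.single j 1 - x j • Pi.single i 1

theorem sum_mul_angularField {ι : Type*} [DecidableEq ι] {S : Finset ι} {i j : ι} (hi : i ∈ S)
    (hj : j ∈ S) (x : ι → ℝ) : ∑ s ∈ S, x s * angularField i j x s = 0 := by
  simp [angularField, Pi.single_apply, mul_sub, Finset.sum_sub_distrib, hi, hj, mul_comm]

theorem xqpart_angularField {i j : Fin (m + 1)} (hi : i ∈ sphericalIdx m p)
    (hj : j ∈ sphericalIdx m p) (x : Fin (m + 1) → ℝ) :
    xqpart m p (angularField i j x) = angularField i j x := by
  rw [xqpart_eq_self_iff]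
  intro s hs
  rw [mem_sphericalIdx] at hi hj
  have hsi : s ≠ i := by omega
  have hsj : s ≠ j := by omega
  simp [angularField, hsi, hsj]

omit [Mul A] [One A] in
theorem emb_angularField (v : ℕ → A) (i j : Fin (m + 1)) (x : Fin (m + 1) → ℝ) :
    emb v m (angularField i j x) = x i • v j - x j • v i := by
  simp [emb, angularField, sub_smul, Finset.sum_sub_distrib, Pi.single_apply]

omit [Mul A] [One A] in
theorem fderiv_apply_angularField (f : (Fin (m + 1) → ℝ) → A) (i j : Fin (m + 1))
    (x : Fin (m + 1) → ℝ) :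
    fderiv ℝ f x (angularField i j x) = x i • pdF m j f x - x j • pdF m i f x := by
  simp [angularField, pdF]

theorem sphericalGamma_eq_of_fderiv_angularField {v : ℕ → A} {f : (Fin (m + 1) → ℝ) → A}
    {x : Fin (m + 1) → ℝ} (hA : IsLeftAlternativeAlg A) (hv : IsSphericalUnits v m p) (c : A)
    (hf : ∀ i ∈ sphericalIdx m p, ∀ j ∈ sphericalIdx m p,
      fderiv ℝ f x (angularField i j x) = emb v m (angularField i j x) * c) :
    sphericalGamma v m p f x = (((m - p : ℕ) : ℝ) - 1) • (emb v m (xqpart m p x) * c) := by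
  have hL : ∀ i ∈ sphericalIdx m p, ∀ j ∈ sphericalIdx m p,
      x i • pdF m j f x - x j • pdF m i f x =
        x i • hA.leftMul (v j) c - x j • hA.leftMul (v i) c := fun i hi j hj => by
    rw [← fderiv_apply_angularField, hf i hi j hj, emb_angularField, ← hA.leftMul_apply, map_sub,
      map_smul, map_smul]
    rfl
  rw [sphericalGamma_eq_sum hA,
    Finset.sum_congr rfl fun i hi => Finset.sum_congr rfl fun j hj => by rw [hL i hi j hj],
    (hv.isCliffordFamily hA).sum_sum_apply_smul_apply_sub, ← leftMul_emb_xqpart hA,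
    card_sphericalIdx, hA.leftMul_apply]
  module

end AngularFields

theorem spherical_dirac_formulas_general
    {A : Type*} [NormedAddCommGroup A] [NormedSpace ℝ A] [Mul A] [One A] [Nontrivial A]
    [SeparatelyContinuousMul A] (hA : IsLeftAlternativeAlg A)
    (v : ℕ → A) (m p : ℕ) (hv : IsSphericalUnits v m p) (hp : p ≤ m)
    (D : Set ((Fin (p + 1) → ℝ) × ℝ)) (hD : IsOpen D)
    (hDrefl : ∀ z ∈ D, reflD p z ∈ D)
    (F₁ F₂ : (Fin (p + 1) → ℝ) × ℝ → A) (hstem : IsStem p D F₁ F₂)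
    (hF₁ : DifferentiableOn ℝ F₁ D) (hF₂ : DifferentiableOn ℝ F₂ D)
    (f : (Fin (m + 1) → ℝ) → A) (hind : Induced v m p D F₁ F₂ f) :
    ∀ x ∈ OmegaD v m p D, rad m p x ≠ 0 →
      sphericalGamma v m p f x =
        (((m - p : ℕ) : ℝ) - 1) • (emb v m (xqpart m p x) * sder v m p f x) ∧
      Dop v m 0 m f x - DomCRat v m p f x =
        (1 - ((m - p : ℕ) : ℝ)) • sder v m p f x := by
  intro x hx hr
  have hxD := hv.mem_of_mem_OmegaD hA hp hDrefl hx
  obtain ⟨f', hf', htangent⟩ := hind.exists_hasFDerivAt_tangent hA hv hp hD hF₁ hF₂ hr hxD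
  rw [← hind.sder_eq hstem hDrefl hA hv hr hxD] at htangent
  have hΓ : sphericalGamma v m p f x =
      (((m - p : ℕ) : ℝ) - 1) • (emb v m (xqpart m p x) * sder v m p f x) :=
    sphericalGamma_eq_of_fderiv_angularField hA hv _ fun i hi j hj => by
      rw [hf'.fderiv]
      exact htangent _ (xqpart_angularField hi hj x) (sum_mul_angularField hi hj x)
  have hsq := hv.leftMul_emb_xqpart_apply_apply_self hA x (sder v m p f x)
  simp only [hA.leftMul_apply] at hsq
  refine ⟨hΓ, ?_⟩
  rw [Dop_sub_DomCRat hA hv hp hr hf'.differentiableAt, hΓ, hA.mul_smul', hsq, smul_comm,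
    smul_neg, inv_smul_smul₀ (pow_ne_zero 2 hr)]
  module

/-- For `f ∈ GS¹(Ω_D) ∩ C¹(Ω_D, 𝔸)`, on `Ω_D ∖ ℝ^{p+1}`:
(i) `Γ f = (q-1) x_q f'_s`;
(ii) `(D_x - D_ω) f = (1-q) f'_s`. -/
theorem spherical_dirac_formulas
    {A : Type*} [NormedAddCommGroup A] [NormedSpace ℝ A] [Mul A] [One A]
    (conj : A → A) (H : IsAltStarAlg A conj)
    (v : ℕ → A) (m p : ℕ) (hv : IsHypBasis A conj v m) (hp : p < m)
    (D : Set ((Fin (p + 1) → ℝ) × ℝ)) (hD : IsOpen D)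
    (hDrefl : ∀ z ∈ D, reflD p z ∈ D)
    (F₁ F₂ : (Fin (p + 1) → ℝ) × ℝ → A) (hstem : IsStem p D F₁ F₂)
    (hF₁ : ContDiffOn ℝ 1 F₁ D) (hF₂ : ContDiffOn ℝ 1 F₂ D)
    (f : (Fin (m + 1) → ℝ) → A) (hind : Induced v m p D F₁ F₂ f)
    (hf : ContDiffOn ℝ 1 f (OmegaD v m p D)) :
    ∀ x ∈ OmegaD v m p D, rad m p x ≠ 0 →
      sphericalGamma v m p f x =
        ((((m - p : ℕ) : ℝ)) - 1) • (emb v m (xqpart m p x) * sder v m p f x) ∧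
      Dop v m 0 m f x - DomCRat v m p f x =
        (1 - (((m - p : ℕ) : ℝ))) • sder v m p f x := by
  have hA := H.isLeftAlternativeAlg
  have := hv.nontrivial
  have := H.separatelyContinuousMul
  exact spherical_dirac_formulas_general hA v m p (hv.isSphericalUnits hA p) hp.le D hD hDrefl F₁ F₂
    hstem (hF₁.differentiableOn one_ne_zero) (hF₂.differentiableOn one_ne_zero) f hind

end GPSM
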